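/- Let P : ℝⁿ → ℝ be twice continuously differentiable and let M be a real n×n matrix. If the matrix product M · HessP(x) (where HessP(x) denotes the Hessian matrix of P at x) satisfies ⟨M · HessP(x) · v, v⟩ > 0 for every x ∈ ℝⁿ and every v ≠ 0, then the vector field f(x) = −M · ∇P(x) is strictly dissipative, i.e. ⟨f(x) − f(y), x − y⟩ < 0 for all x ≠ y. -/

import Mathlib

open Matrix

/-!
A vector-valued function has no mean value equality, but its pairing with a fixed vector does:
`⟨f x - f y, x - y⟩ = ⟨f' z (x - y), x - y⟩` for some `z` between `x` and `y`. So a vector field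
whose derivative is everywhere a negative definite quadratic form is strictly dissipative, and the
derivative of `-M ∇P` is `-M HessP`.
-/

section

variable {m n : Type*} [Fintype m] [Fintype n]

/-- The vector field `f` is strictly dissipative on `s`, with respect to the Euclidean inner
product, written as `⬝ᵥ` because `n → ℝ` carries the sup norm. -/
def StrictlyDissipativeOn (f : (n → ℝ) → n → ℝ) (s : Set (n → ℝ)) : Prop :=
  ∀ ⦃x⦄, x ∈ s → ∀ ⦃y⦄, y ∈ s → x ≠ y → (f x - f y) ⬝ᵥ (x - y) < 0

theorem exists_mem_segment_clm_sub_eq {E F : Type*} [NormedAddCommGroup E] [NormedSpace ℝ E]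
    [NormedAddCommGroup F] [NormedSpace ℝ F] {f : E → F} {f' : E → E →L[ℝ] F} {s : Set E}
    (hs : Convex ℝ s) (hf : ∀ x ∈ s, HasFDerivWithinAt f (f' x) s x) (φ : F →L[ℝ] ℝ) {x y : E}
    (hx : x ∈ s) (hy : y ∈ s) :
    ∃ z ∈ segment ℝ x y, φ (f y - f x) = φ (f' z (y - x)) := by
  simpa only [Function.comp_apply, ContinuousLinearMap.comp_apply, ← map_sub] using
    domain_mvt (fun z hz ↦ φ.hasFDerivAt.comp_hasFDerivWithinAt z (hf z hz)) hs hx hy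

theorem strictlyDissipativeOn_of_hasFDerivWithinAt {f : (n → ℝ) → n → ℝ}
    {f' : (n → ℝ) → (n → ℝ) →L[ℝ] n → ℝ} {s : Set (n → ℝ)} (hs : Convex ℝ s)
    (hf : ∀ x ∈ s, HasFDerivWithinAt f (f' x) s x)
    (hneg : ∀ x ∈ s, ∀ v ≠ 0, f' x v ⬝ᵥ v < 0) : StrictlyDissipativeOn f s := by
  intro x hx y hy hxy
  let φ : (n → ℝ) →L[ℝ] ℝ := (dotProductBilin ℝ ℝ (x - y)).toContinuousLinearMap
  have φ_apply (w : n → ℝ) : φ w = w ⬝ᵥ (x - y) := dotProduct_comm (x - y) w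
  obtain ⟨z, hz, hmean⟩ := exists_mem_segment_clm_sub_eq hs hf φ hy hx
  calc (f x - f y) ⬝ᵥ (x - y) = f' z (x - y) ⬝ᵥ (x - y) := by simpa only [φ_apply] using hmean
    _ < 0 := hneg z (hs.segment_subset hy hx hz) _ (sub_ne_zero.mpr hxy)

theorem hasFDerivWithinAt_const_mulVec {l E : Type*} [Finite l] [NormedAddCommGroup E]
    [NormedSpace ℝ E] (M : Matrix l m ℝ) {g : E → m → ℝ} {g' : E →L[ℝ] m → ℝ} {s : Set E} {x : E}
    (hg : HasFDerivWithinAt g g' s x) :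
    HasFDerivWithinAt (fun x ↦ M *ᵥ g x) (M.mulVecLin.toContinuousLinearMap ∘L g') s x := by
  have := Fintype.ofFinite l
  exact M.mulVecLin.toContinuousLinearMap.hasFDerivAt.comp_hasFDerivWithinAt x hg

theorem stmt_0_general {s : Set (n → ℝ)} (hs : Convex ℝ s) {g : (n → ℝ) → m → ℝ}
    {J : (n → ℝ) → Matrix m n ℝ} {M : Matrix n m ℝ}
    (hg : ∀ x ∈ s, HasFDerivWithinAt g (J x).mulVecLin.toContinuousLinearMap s x)
    (hpos : ∀ x ∈ s, ∀ v ≠ 0, 0 < ((M * J x) *ᵥ v) ⬝ᵥ v) :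
    StrictlyDissipativeOn (fun x ↦ -(M *ᵥ g x)) s := by
  refine strictlyDissipativeOn_of_hasFDerivWithinAt hs
    (fun x hx ↦ (hasFDerivWithinAt_const_mulVec M (hg x hx)).neg) fun x hx v hv ↦ ?_
  change -(M *ᵥ (J x *ᵥ v)) ⬝ᵥ v < 0
  rw [mulVec_mulVec, neg_dotProduct, neg_lt_zero]
  exact hpos x hx v hv

end

/-- If `M · HessP(x)` is positive definite everywhere, then the vector field
`f(x) = −M·∇P(x)` is strictly dissipative. -/
theorem stmt_0 {n : ℕ} (P : (Fin n → ℝ) → ℝ)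
    (gradP : (Fin n → ℝ) → (Fin n → ℝ))
    (HessP : (Fin n → ℝ) → Matrix (Fin n) (Fin n) ℝ)
    (M : Matrix (Fin n) (Fin n) ℝ)
    (hP : ContDiff ℝ 2 P)
    (hgrad : ∀ x v, fderiv ℝ P x v = gradP x ⬝ᵥ v)
    (hHess : ∀ x, HasFDerivAt gradP
      (LinearMap.toContinuousLinearMap (HessP x).mulVecLin) x)
    (hpos : ∀ (x v : Fin n → ℝ), v ≠ 0 → 0 < ((M * HessP x).mulVec v) ⬝ᵥ v) :
    ∀ x y : Fin n → ℝ, x ≠ y →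
      ((-(M.mulVec (gradP x))) - (-(M.mulVec (gradP y)))) ⬝ᵥ (x - y) < 0 := by
  intro x y hxy
  exact stmt_0_general convex_univ (fun z _ ↦ (hHess z).hasFDerivWithinAt)
    (fun z _ ↦ hpos z) (Set.mem_univ x) (Set.mem_univ y) hxy
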